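/- arXiv:2401.07378 — 2 statements merged into one kernel-verified Lean document; each statement's English description precedes it below -/
import Mathlib

section
/- Exactness of the NNS-EMD approximation (Theorem 2, abstract form): let F* be a feasible flow between weight vectors s and c with cost matrix D, and suppose F* is supported on nearest-supplier pairs, i.e., whenever F*_{i,j} > 0 one has D_{i,j} = min_{1 ≤ i' ≤ m} D_{i',j}. Then for every feasible flow F, Σ_{i,j} F*_{i,j} D_{i,j} ≤ Σ_{i,j} F_{i,j} D_{i,j}; consequently Σ_{i,j} F*_{i,j} D_{i,j} equals the Earth Mover's Distance EMD(s, c). -/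
open Finset

/-- A matrix `F` is a feasible flow between weight vectors `s` and `c` if all its
entries are nonnegative, its column sums are `c`, and its row sums are `s`. -/
def IsFeasibleFlow {m n : ℕ} (s : Fin m → ℝ) (c : Fin n → ℝ)
    (F : Matrix (Fin m) (Fin n) ℝ) : Prop :=
  (∀ i j, 0 ≤ F i j) ∧ (∀ j, ∑ i, F i j = c j) ∧ (∀ i, ∑ j, F i j = s i)

/-- The Earth Mover's Distance: the minimum (infimum) of the total transport cost
over all feasible flows between `s` and `c` with cost matrix `D`. -/
noncomputable def EMD {m n : ℕ} (s : Fin m → ℝ) (c : Fin n → ℝ)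
    (D : Matrix (Fin m) (Fin n) ℝ) : ℝ :=
  sInf {x : ℝ | ∃ F : Matrix (Fin m) (Fin n) ℝ,
    IsFeasibleFlow s c F ∧ x = ∑ i, ∑ j, F i j * D i j}

/-!
This is complementary slackness for the transport problem. Potentials `u`, `v` with
`u i + v j ≤ D i j` bound the cost of every flow with marginals `s`, `c` from below by
`∑ i, s i * u i + ∑ j, c j * v j`, and a flow supported where `u i + v j = D i j` attains
this bound. For a flow supported on nearest-supplier pairs, take `u = 0` and let `v j` be the
distance from consumer `j` to its nearest supplier.
-/

section Potentials

variable {ι κ R : Type*} [Fintype ι] [Fintype κ] [Semiring R]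
  {F D : Matrix ι κ R} {u : ι → R} {v : κ → R}

lemma sum_mul_add_eq_sum_marginals_mul (F : Matrix ι κ R) (u : ι → R) (v : κ → R) :
    ∑ i, ∑ j, F i j * (u i + v j) =
      ∑ i, (∑ j, F i j) * u i + ∑ j, (∑ i, F i j) * v j := by
  simp only [mul_add, sum_add_distrib, sum_mul]
  rw [sum_comm (f := fun i j => F i j * v j)]

lemma sum_mul_eq_sum_marginals_mul_of_slackness (h : ∀ i j, F i j ≠ 0 → D i j = u i + v j) :
    ∑ i, ∑ j, F i j * D i j =
      ∑ i, (∑ j, F i j) * u i + ∑ j, (∑ i, F i j) * v j := by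
  rw [← sum_mul_add_eq_sum_marginals_mul]
  refine sum_congr rfl fun i _ => sum_congr rfl fun j _ => ?_
  obtain hzero | hne := eq_or_ne (F i j) 0
  · simp [hzero]
  · rw [h i j hne]

lemma sum_marginals_mul_le_sum_mul [PartialOrder R] [IsOrderedRing R]
    (hF : ∀ i j, 0 ≤ F i j) (h : ∀ i j, u i + v j ≤ D i j) :
    ∑ i, (∑ j, F i j) * u i + ∑ j, (∑ i, F i j) * v j ≤
      ∑ i, ∑ j, F i j * D i j := by
  rw [← sum_mul_add_eq_sum_marginals_mul]
  gcongr with i _ j _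
  · exact hF i j
  · exact h i j

end Potentials

namespace IsFeasibleFlow

variable {m n : ℕ} {s : Fin m → ℝ} {c : Fin n → ℝ} {F D : Matrix (Fin m) (Fin n) ℝ}
  {u : Fin m → ℝ} {v : Fin n → ℝ}

lemma sum_mul_eq_of_slackness (hF : IsFeasibleFlow s c F)
    (h : ∀ i j, 0 < F i j → D i j = u i + v j) :
    ∑ i, ∑ j, F i j * D i j = ∑ i, s i * u i + ∑ j, c j * v j := by
  obtain ⟨hnonneg, hcol, hrow⟩ := hF
  simpa only [hcol, hrow] using
    sum_mul_eq_sum_marginals_mul_of_slackness fun i j hne =>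
      h i j ((hnonneg i j).lt_of_ne' hne)

lemma le_sum_mul_of_add_le (hF : IsFeasibleFlow s c F) (h : ∀ i j, u i + v j ≤ D i j) :
    ∑ i, s i * u i + ∑ j, c j * v j ≤ ∑ i, ∑ j, F i j * D i j := by
  obtain ⟨hnonneg, hcol, hrow⟩ := hF
  simpa only [hcol, hrow] using sum_marginals_mul_le_sum_mul hnonneg h

lemma sum_mul_eq_emd (hF : IsFeasibleFlow s c F)
    (hmin : ∀ G : Matrix (Fin m) (Fin n) ℝ, IsFeasibleFlow s c G →
      ∑ i, ∑ j, F i j * D i j ≤ ∑ i, ∑ j, G i j * D i j) :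
    ∑ i, ∑ j, F i j * D i j = EMD s c D := by
  have hleast : IsLeast {x : ℝ | ∃ G : Matrix (Fin m) (Fin n) ℝ,
      IsFeasibleFlow s c G ∧ x = ∑ i, ∑ j, G i j * D i j} (∑ i, ∑ j, F i j * D i j) :=
    ⟨⟨F, hF, rfl⟩, by rintro _ ⟨G, hG, rfl⟩; exact hmin G hG⟩
  exact hleast.csInf_eq.symm

end IsFeasibleFlow

theorem nns_emd_exactness_general {m n : ℕ}
    {s : Fin m → ℝ} {c : Fin n → ℝ} {D : Matrix (Fin m) (Fin n) ℝ}
    {u : Fin m → ℝ} {v : Fin n → ℝ} (hpot : ∀ i j, u i + v j ≤ D i j)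
    {Fstar : Matrix (Fin m) (Fin n) ℝ} (hFstar : IsFeasibleFlow s c Fstar)
    (hsupp : ∀ i j, 0 < Fstar i j → D i j = u i + v j) :
    (∀ F : Matrix (Fin m) (Fin n) ℝ, IsFeasibleFlow s c F →
      ∑ i, ∑ j, Fstar i j * D i j ≤ ∑ i, ∑ j, F i j * D i j) ∧
    ∑ i, ∑ j, Fstar i j * D i j = EMD s c D := by
  have hmin (F : Matrix (Fin m) (Fin n) ℝ) (hF : IsFeasibleFlow s c F) :
      ∑ i, ∑ j, Fstar i j * D i j ≤ ∑ i, ∑ j, F i j * D i j :=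
    calc ∑ i, ∑ j, Fstar i j * D i j
      _ = ∑ i, s i * u i + ∑ j, c j * v j := hFstar.sum_mul_eq_of_slackness hsupp
      _ ≤ ∑ i, ∑ j, F i j * D i j := hF.le_sum_mul_of_add_le hpot
  exact ⟨hmin, hFstar.sum_mul_eq_emd hmin⟩

/-- Exactness of the NNS-EMD approximation: if a feasible flow `Fstar` is supported
on nearest-supplier pairs (whenever `Fstar i j > 0`, `D i j` attains the minimum of
`D i' j` over suppliers `i'`), then its cost is at most the cost of every feasible
flow, and hence equals the Earth Mover's Distance. -/
theorem nns_emd_exactness (m n : ℕ) (hm : 0 < m)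
    (s : Fin m → ℝ) (c : Fin n → ℝ) (D : Matrix (Fin m) (Fin n) ℝ)
    (hs : ∀ i, 0 ≤ s i) (hc : ∀ j, 0 ≤ c j)
    (hs1 : ∑ i, s i = 1) (hc1 : ∑ j, c j = 1)
    (hD : ∀ i j, 0 ≤ D i j)
    (Fstar : Matrix (Fin m) (Fin n) ℝ) (hFstar : IsFeasibleFlow s c Fstar)
    (hsupp : ∀ i j, 0 < Fstar i j →
      D i j = Finset.univ.inf' ⟨⟨0, hm⟩, Finset.mem_univ _⟩ fun i' => D i' j) :
    (∀ F : Matrix (Fin m) (Fin n) ℝ, IsFeasibleFlow s c F →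
      ∑ i, ∑ j, Fstar i j * D i j ≤ ∑ i, ∑ j, F i j * D i j) ∧
    ∑ i, ∑ j, Fstar i j * D i j = EMD s c D :=
  nns_emd_exactness_general (u := 0)
    (fun i j => (zero_add _).trans_le (inf'_le (fun i' => D i' j) (mem_univ i))) hFstar
    fun i j hpos => (hsupp i j hpos).trans (zero_add _).symm
end

section
/- Global error bound of the NNS-EMD approximation (Theorem 1, inequality (6), abstract form): let F* be a feasible flow between weight vectors s and c with nonnegative cost matrix D, and suppose that for every supplier i there is a consumer index j*_i such that D_{i,j} ≤ D_{i,j*_i} for every j with F*_{i,j} > 0. Let F^opt be a feasible flow minimizing Σ_{i,j} F_{i,j} D_{i,j} over all feasible flows. Then 0 ≤ Σ_{i,j} F*_{i,j} D_{i,j} − Σ_{i,j} F^opt_{i,j} D_{i,j} ≤ Σ_{i=1}^m D_{i,j*_i}. -/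
open Finset

/-!
An optimal flow has nonnegative cost, so the error is at most the cost of `Fstar`. Row `i` of
`Fstar` ships the mass `s i` along entries of cost at most `D i (jstar i)`, so it costs at most
`s i * D i (jstar i)`; a weight of a probability vector is at most one.
-/

section Weights

variable {ι R : Type*} [Semiring R] [PartialOrder R] [IsOrderedRing R]
  {t : Finset ι} {w f : ι → R}

theorem sum_mul_le_sum_mul_of_le_of_pos {b : R} (hw : ∀ i ∈ t, 0 ≤ w i)
    (hfb : ∀ i ∈ t, 0 < w i → f i ≤ b) : ∑ i ∈ t, w i * f i ≤ (∑ i ∈ t, w i) * b := by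
  rw [sum_mul]
  refine sum_le_sum fun i hi => ?_
  rcases (hw i hi).eq_or_lt with hzero | hpos
  · simp [← hzero]
  · exact mul_le_mul_of_nonneg_left (hfb i hi hpos) hpos.le

theorem sum_mul_le_sum_of_sum_le_one (hw : ∀ i ∈ t, 0 ≤ w i) (hw1 : ∑ i ∈ t, w i ≤ 1)
    (hf : ∀ i ∈ t, 0 ≤ f i) : ∑ i ∈ t, w i * f i ≤ ∑ i ∈ t, f i :=
  sum_le_sum fun i hi =>
    mul_le_of_le_one_left (hf i hi) ((single_le_sum hw hi).trans hw1)

end Weights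

section Transport

variable {ι κ R : Type*} [Fintype ι] [Fintype κ]

/-- The total cost of moving the amounts `F i j` at the unit costs `D i j`. -/
def transportCost [NonUnitalNonAssocSemiring R] (F D : Matrix ι κ R) : R :=
  ∑ i, ∑ j, F i j * D i j

/-- Transport plans with row marginal `s` and column marginal `c`: feasible flows between arbitrary
finite families of weights, whose total mass need not be one. -/
structure IsTransportPlan [AddCommMonoid R] [LE R] (s : ι → R) (c : κ → R)
    (F : Matrix ι κ R) : Prop where
  nonneg : ∀ i j, 0 ≤ F i j
  sum_col : ∀ j, ∑ i, F i j = c j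
  sum_row : ∀ i, ∑ j, F i j = s i

/-- Optimal transport plans: those of least cost with respect to `D` among all plans with the same
marginals. -/
structure IsOptimalTransportPlan [NonUnitalNonAssocSemiring R] [LE R] (s : ι → R) (c : κ → R)
    (D F : Matrix ι κ R) : Prop extends IsTransportPlan s c F where
  cost_le : ∀ G, IsTransportPlan s c G → transportCost F D ≤ transportCost G D

section Semiring

variable [Semiring R] [PartialOrder R] [IsOrderedRing R] {s : ι → R} {c : κ → R}
  {D F : Matrix ι κ R}

theorem transportCost_nonneg (hF : ∀ i j, 0 ≤ F i j) (hD : ∀ i j, 0 ≤ D i j) :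
    0 ≤ transportCost F D :=
  sum_nonneg fun i _ => sum_nonneg fun j _ => mul_nonneg (hF i j) (hD i j)

theorem IsTransportPlan.transportCost_le (hF : IsTransportPlan s c F) {b : ι → R}
    (hb : ∀ i j, 0 < F i j → D i j ≤ b i) : transportCost F D ≤ ∑ i, s i * b i := by
  refine sum_le_sum fun i _ => ?_
  rw [← hF.sum_row i]
  exact sum_mul_le_sum_mul_of_le_of_pos (fun j _ => hF.nonneg i j) fun j _ => hb i j

end Semiring

theorem nns_emd_global_error_bound_general [Ring R] [PartialOrder R] [IsOrderedRing R]
    {s : ι → R} {c : κ → R} {D Fstar Fopt : Matrix ι κ R} (hD : ∀ i j, 0 ≤ D i j)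
    (hFstar : IsTransportPlan s c Fstar) {b : ι → R}
    (hb : ∀ i j, 0 < Fstar i j → D i j ≤ b i) (hFopt : IsOptimalTransportPlan s c D Fopt) :
    0 ≤ transportCost Fstar D - transportCost Fopt D ∧
      transportCost Fstar D - transportCost Fopt D ≤ ∑ i, s i * b i :=
  ⟨sub_nonneg.mpr (hFopt.cost_le Fstar hFstar),
    (sub_le_self _ (transportCost_nonneg hFopt.nonneg hD)).trans (hFstar.transportCost_le hb)⟩

end Transport

theorem isFeasibleFlow_iff_isTransportPlan {m n : ℕ} {s : Fin m → ℝ} {c : Fin n → ℝ}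
    {F : Matrix (Fin m) (Fin n) ℝ} : IsFeasibleFlow s c F ↔ IsTransportPlan s c F :=
  ⟨fun ⟨hnonneg, hcol, hrow⟩ => ⟨hnonneg, hcol, hrow⟩,
    fun hF => ⟨hF.nonneg, hF.sum_col, hF.sum_row⟩⟩

/-- Global error bound of the NNS-EMD approximation (Theorem 1, inequality (6)):
if `Fstar` is a feasible flow such that for every supplier `i` there is a consumer
`jstar i` with `D i j ≤ D i (jstar i)` whenever `Fstar i j > 0`, and `Fopt` is an
optimal feasible flow, then
`0 ≤ cost(Fstar) - cost(Fopt) ≤ ∑ i, D i (jstar i)`. -/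
theorem nns_emd_global_error_bound (m n : ℕ)
    (s : Fin m → ℝ) (c : Fin n → ℝ) (D : Matrix (Fin m) (Fin n) ℝ)
    (hs : ∀ i, 0 ≤ s i) (hc : ∀ j, 0 ≤ c j)
    (hs1 : ∑ i, s i = 1) (hc1 : ∑ j, c j = 1)
    (hD : ∀ i j, 0 ≤ D i j)
    (Fstar : Matrix (Fin m) (Fin n) ℝ) (hFstar : IsFeasibleFlow s c Fstar)
    (jstar : Fin m → Fin n)
    (hjstar : ∀ i j, 0 < Fstar i j → D i j ≤ D i (jstar i))
    (Fopt : Matrix (Fin m) (Fin n) ℝ) (hFopt : IsFeasibleFlow s c Fopt)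
    (hopt : ∀ F : Matrix (Fin m) (Fin n) ℝ, IsFeasibleFlow s c F →
      ∑ i, ∑ j, Fopt i j * D i j ≤ ∑ i, ∑ j, F i j * D i j) :
    0 ≤ ∑ i, ∑ j, Fstar i j * D i j - ∑ i, ∑ j, Fopt i j * D i j ∧
      ∑ i, ∑ j, Fstar i j * D i j - ∑ i, ∑ j, Fopt i j * D i j ≤
        ∑ i, D i (jstar i) := by
  have hoptimal : IsOptimalTransportPlan s c D Fopt :=
    ⟨isFeasibleFlow_iff_isTransportPlan.mp hFopt,
      fun G hG => hopt G (isFeasibleFlow_iff_isTransportPlan.mpr hG)⟩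
  have hbounds := nns_emd_global_error_bound_general hD
    (isFeasibleFlow_iff_isTransportPlan.mp hFstar) hjstar hoptimal
  exact ⟨hbounds.1, hbounds.2.trans <| sum_mul_le_sum_of_sum_le_one (fun i _ => hs i) hs1.le
    fun i _ => hD i (jstar i)⟩
end
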